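/- arXiv:2109.02709 — 2 statements merged into one kernel-verified Lean document; each statement's English description precedes it below -/
import Mathlib

section
/- Let p ≥ 1, let φ be a Bernstein function with φ(0) = 0 and φ(∞) = ∞, let Ψ be its inverse, and let (μ_t)_{t>0} be the family of marginal laws of the subordinator associated with φ. If the function t ↦ t·∫ x^{−p} μ_t(dx) is a Stieltjes transform on (0,∞), then Ψ^p belongs to Lle(0,∞), i.e. Ψ(λ)^p admits a representation Ψ(λ)^p = βλ + (γ²/2)λ² + ∫_{(0,∞)} (e^{−λx} − 1 + λx/(1+x²)) ν(dx) with γ ≥ 0, β ∈ ℝ and ∫ min(x²,1) ν(dx) < ∞; equivalently, λ ↦ φ(λ^{1/p}) is the Bernstein function of the first-passage-time process of a spectrally negative Lévy process with Lévy–Laplace exponent Ψ^p. -/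
open MeasureTheory Set Filter

/-- A Bernstein function on `(0,∞)`: a nonnegative smooth function whose derivatives satisfy
`(−1)^{n−1} f^{(n)} ≥ 0` on `(0,∞)` for every `n ≥ 1`. -/
def IsBernsteinFn (f : ℝ → ℝ) : Prop :=
  (∀ x : ℝ, 0 < x → 0 ≤ f x) ∧ ContDiffOn ℝ (⊤ : ℕ∞) f (Ioi 0) ∧
    ∀ n : ℕ, 1 ≤ n → ∀ x : ℝ, 0 < x → 0 ≤ (-1 : ℝ) ^ (n - 1) * iteratedDeriv n f x

/-- A Stieltjes transform on `(0,∞)`: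
`f(λ) = d + q/λ + ∫_{(0,∞)} (λ+u)⁻¹ Δ(du)` with `d, q ≥ 0` and `Δ` a Borel measure on
`(0,∞)` integrating `(1+u)⁻¹`. -/
def IsStieltjesFn (f : ℝ → ℝ) : Prop :=
  ∃ d q : ℝ, 0 ≤ d ∧ 0 ≤ q ∧ ∃ Δ : Measure ℝ, Δ {x | x ≤ 0} = 0 ∧
    (∫⁻ u, ENNReal.ofReal ((1 + u)⁻¹) ∂Δ) < ⊤ ∧
    ∀ l : ℝ, 0 < l → f l = d + q / l + ∫ u, (l + u)⁻¹ ∂Δ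

open ProbabilityTheory in
/-- Finite measures on `ℝ` whose moment generating functions are finite and coincide on `(-∞, 1)`
are equal. -/
theorem ext_of_mgf_eqOn_Iio {M N : Measure ℝ} [IsFiniteMeasure M] [IsFiniteMeasure N]
    (hM : ∀ t < 1, Integrable (fun x => Real.exp (t * x)) M)
    (hN : ∀ t < 1, Integrable (fun x => Real.exp (t * x)) N)
    (h : ∀ t < 1, mgf id M t = mgf id N t) : M = N := by
  have hsub : ∀ {L : Measure ℝ}, (∀ t < 1, Integrable (fun x => Real.exp (t * x)) L) →
      Iio 1 ⊆ interior (integrableExpSet id L) := fun hL =>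
    isOpen_Iio.subset_interior_iff.2 fun t ht => hL t ht
  have hAM : AnalyticOnNhd ℂ (complexMGF id M) {z | z.re ∈ Iio (1 : ℝ)} :=
    analyticOnNhd_complexMGF.mono fun z hz => hsub hM hz
  have hAN : AnalyticOnNhd ℂ (complexMGF id N) {z | z.re ∈ Iio (1 : ℝ)} :=
    analyticOnNhd_complexMGF.mono fun z hz => hsub hN hz
  have heq : EqOn (complexMGF id M) (complexMGF id N) {z | z.re ∈ Iio (1 : ℝ)} := by
    refine AnalyticOnNhd.eqOn_of_preconnected_of_frequently_eq hAM hAN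
      ((convex_Iio (1 : ℝ)).linear_preimage Complex.reLm).isPreconnected
      (z₀ := ((0 : ℝ) : ℂ)) (by simp) ?_
    have h_real : ∃ᶠ x : ℝ in nhdsWithin 0 {0}ᶜ, complexMGF id M x = complexMGF id N x := by
      refine Eventually.frequently ?_
      filter_upwards [nhdsWithin_le_nhds (Iio_mem_nhds zero_lt_one)] with x hx
      rw [complexMGF_ofReal, complexMGF_ofReal, h x hx]
    rw [frequently_iff_seq_forall] at h_real ⊢
    obtain ⟨xs, hx_tendsto, hx_eq⟩ := h_real
    refine ⟨fun n => xs n, ?_, hx_eq⟩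
    rw [tendsto_nhdsWithin_iff] at hx_tendsto ⊢
    exact ⟨(Complex.continuous_ofReal.tendsto 0).comp hx_tendsto.1, by simpa using hx_tendsto.2⟩
  refine Measure.ext_of_charFun (funext fun t => ?_)
  rw [← complexMGF_id_mul_I, ← complexMGF_id_mul_I]
  exact heq (by simp)

/-- Uniqueness of the Laplace transform for densities on `(0,∞)`. -/
theorem ae_eq_of_laplace_eq {F G : ℝ → ENNReal} (hF : AEMeasurable F (volume.restrict (Ioi 0)))
    (hG : AEMeasurable G (volume.restrict (Ioi 0)))
    (hfin : ∀ t : ℝ, 0 < t → ∫⁻ s in Ioi 0, ENNReal.ofReal (Real.exp (-(t * s))) * F s ≠ ⊤)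
    (h : ∀ t : ℝ, 0 < t → ∫⁻ s in Ioi 0, ENNReal.ofReal (Real.exp (-(t * s))) * F s =
      ∫⁻ s in Ioi 0, ENNReal.ofReal (Real.exp (-(t * s))) * G s) :
    F =ᵐ[volume.restrict (Ioi 0)] G := by
  have hE : ∀ t : ℝ, Measurable fun s : ℝ => ENNReal.ofReal (Real.exp (t * s)) := fun t => by
    fun_prop
  have hE' : ∀ t : ℝ, Measurable fun s : ℝ => ENNReal.ofReal (Real.exp (-(t * s))) := fun t => by
    fun_prop
  have key : ∀ K : ℝ → ENNReal, AEMeasurable K (volume.restrict (Ioi 0)) → ∀ t : ℝ,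
      ∫⁻ s, ENNReal.ofReal (Real.exp (t * s)) ∂((volume.restrict (Ioi 0)).withDensity
        fun s => ENNReal.ofReal (Real.exp (-(1 * s))) * K s) =
      ∫⁻ s in Ioi 0, ENNReal.ofReal (Real.exp (-((1 - t) * s))) * K s := by
    intro K hK t
    rw [lintegral_withDensity_eq_lintegral_mul₀ ((hE' 1).aemeasurable.fun_mul hK)
      (hE t).aemeasurable]
    refine lintegral_congr fun s => ?_
    simp only [Pi.mul_apply]
    rw [mul_right_comm, ← ENNReal.ofReal_mul (Real.exp_pos _).le, ← Real.exp_add]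
    ring_nf
  have hfin' : ∀ K : ℝ → ENNReal, AEMeasurable K (volume.restrict (Ioi 0)) →
      (∀ t : ℝ, 0 < t → ∫⁻ s in Ioi 0, ENNReal.ofReal (Real.exp (-(t * s))) * K s ≠ ⊤) →
      ∀ t < 1, Integrable (fun x => Real.exp (t * x)) ((volume.restrict (Ioi 0)).withDensity
        fun s => ENNReal.ofReal (Real.exp (-(1 * s))) * K s) := by
    intro K hK hKf t ht
    refine (lintegral_ofReal_ne_top_iff_integrable (by fun_prop)
      (ae_of_all _ fun _ => (Real.exp_pos _).le)).1 ?_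
    rw [key K hK]
    exact hKf _ (by linarith)
  have hGfin : ∀ t : ℝ, 0 < t →
      ∫⁻ s in Ioi 0, ENNReal.ofReal (Real.exp (-(t * s))) * G s ≠ ⊤ := fun t ht =>
    h t ht ▸ hfin t ht
  have := isFiniteMeasure_withDensity (hfin 1 one_pos)
  have := isFiniteMeasure_withDensity (hGfin 1 one_pos)
  have hMN := ext_of_mgf_eqOn_Iio (hfin' F hF hfin) (hfin' G hG hGfin) fun t ht => by
    simp only [ProbabilityTheory.mgf, id]
    rw [integral_eq_lintegral_of_nonneg_ae (ae_of_all _ fun _ => (Real.exp_pos _).le)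
      (by fun_prop), integral_eq_lintegral_of_nonneg_ae (ae_of_all _ fun _ => (Real.exp_pos _).le)
      (by fun_prop), key F hF, key G hG, h _ (by linarith)]
  have hae := (withDensity_eq_iff ((hE' 1).aemeasurable.mul hF) ((hE' 1).aemeasurable.mul hG)
    (hfin 1 one_pos)).1 hMN
  filter_upwards [hae] with s hs
  exact (ENNReal.mul_right_inj (by simp [Real.exp_pos]) ENNReal.ofReal_ne_top).1 hs

theorem integral_pow_mul_exp_neg_mul_Ioi (n : ℕ) {t : ℝ} (ht : 0 < t) :
    ∫ s in Ioi (0 : ℝ), s ^ n * Real.exp (-(t * s)) = n.factorial / t ^ (n + 1) := by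
  have h := Real.integral_rpow_mul_exp_neg_mul_Ioi (a := n + 1) (by positivity) ht
  simp only [add_sub_cancel_right, Real.rpow_natCast, Real.Gamma_nat_eq_factorial] at h
  rw [h, ← Nat.cast_succ, Real.rpow_natCast]
  simp [div_eq_inv_mul]

theorem integrableOn_pow_mul_exp_neg_mul_Ioi (n : ℕ) {t : ℝ} (ht : 0 < t) :
    IntegrableOn (fun s : ℝ => s ^ n * Real.exp (-(t * s))) (Ioi 0) :=
  Integrable.of_integral_ne_zero (by
    rw [integral_pow_mul_exp_neg_mul_Ioi n ht]; positivity)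

theorem lintegral_exp_neg_mul_mul_pow (n : ℕ) {t : ℝ} (ht : 0 < t) :
    ∫⁻ s in Ioi (0 : ℝ), ENNReal.ofReal (Real.exp (-(t * s))) * ENNReal.ofReal (s ^ n) =
      ENNReal.ofReal (n.factorial / t ^ (n + 1)) := by
  rw [← integral_pow_mul_exp_neg_mul_Ioi n ht, ofReal_integral_eq_lintegral_ofReal
    (integrableOn_pow_mul_exp_neg_mul_Ioi n ht)]
  · refine lintegral_congr fun s => ?_
    rw [← ENNReal.ofReal_mul (Real.exp_pos _).le, mul_comm]
  · filter_upwards [ae_restrict_mem measurableSet_Ioi] with s hs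
    have : (0 : ℝ) < s := hs
    positivity

/-- The kernel `(e^{-su} - 1 + su) / u²`. -/
noncomputable def levyKernel (s u : ℝ) : ℝ := (Real.exp (-(s * u)) - 1 + s * u) / u ^ 2

theorem levyKernel_nonneg (s u : ℝ) : 0 ≤ levyKernel s u :=
  div_nonneg (by linarith [Real.add_one_le_exp (-(s * u))]) (sq_nonneg u)

theorem measurable_levyKernel : Measurable fun x : ℝ × ℝ => levyKernel x.1 x.2 := by
  unfold levyKernel
  fun_prop

theorem levyKernel_le {s u : ℝ} (hs : 0 ≤ s) (hu : 0 < u) :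
    levyKernel s u ≤ (s ^ 2 + s) * (1 + u)⁻¹ := by
  unfold levyKernel
  have hsu : 0 ≤ s * u := by positivity
  rw [← div_eq_mul_inv, div_le_div_iff₀ (by positivity) (by positivity)]
  have h1 : Real.exp (-(s * u)) - 1 + s * u ≤ s * u := by
    linarith [Real.exp_le_one_iff.2 (neg_nonpos.2 hsu)]
  have h2 : Real.exp (-(s * u)) - 1 + s * u ≤ (s * u) ^ 2 := by
    have h3 : Real.exp (-(s * u)) * (1 + s * u) ≤ 1 := by
      have h4 := Real.add_one_le_exp (s * u)
      rw [Real.exp_neg, ← div_eq_inv_mul, div_le_one (Real.exp_pos _)]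
      linarith
    have : Real.exp (-(s * u)) ≤ 1 / (1 + s * u) := by
      rwa [le_div_iff₀ (by positivity)]
    have : 1 / (1 + s * u) - 1 + s * u ≤ (s * u) ^ 2 := by
      rw [div_sub_one (by positivity), div_add' _ _ _ (by positivity), div_le_iff₀ (by positivity)]
      nlinarith [pow_nonneg hsu 3]
    linarith
  nlinarith [mul_le_mul_of_nonneg_right h1 hu.le]

theorem levyKernel_mono {s s' u : ℝ} (hs : 0 ≤ s) (hss' : s ≤ s') (hu : 0 < u) :
    levyKernel s u ≤ levyKernel s' u := by
  unfold levyKernel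
  gcongr ?_ / _
  have h2 := Real.add_one_le_exp (-((s' - s) * u))
  have h3 : Real.exp (-(s' * u)) = Real.exp (-(s * u)) * Real.exp (-((s' - s) * u)) := by
    rw [← Real.exp_add]; ring_nf
  have h4 : Real.exp (-(s * u)) ≤ 1 := Real.exp_le_one_iff.2 (by nlinarith)
  have h5 : 0 ≤ (s' - s) * u := mul_nonneg (by linarith) hu.le
  rw [h3]
  nlinarith [Real.exp_pos (-(s * u)), mul_le_mul_of_nonneg_left h2 (Real.exp_pos (-(s * u))).le]

theorem lintegral_exp_neg_mul_mul_levyKernel {t u : ℝ} (ht : 0 < t) (hu : 0 < u) :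
    ∫⁻ s in Ioi (0 : ℝ), ENNReal.ofReal (Real.exp (-(t * s))) * ENNReal.ofReal (levyKernel s u) =
      ENNReal.ofReal (1 / t ^ 2 * (t + u)⁻¹) := by
  have htu : 0 < t + u := by positivity
  have e : ∀ s : ℝ, Real.exp (-(t * s)) * levyKernel s u =
      (u ^ 2)⁻¹ * (s ^ 0 * Real.exp (-((t + u) * s)) - s ^ 0 * Real.exp (-(t * s)) +
        u * (s ^ 1 * Real.exp (-(t * s)))) := by
    intro s
    rw [show -((t + u) * s) = -(t * s) + -(s * u) by ring, Real.exp_add, levyKernel]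
    field_simp
  have i0 := integrableOn_pow_mul_exp_neg_mul_Ioi 0 htu
  have i1 := integrableOn_pow_mul_exp_neg_mul_Ioi 0 ht
  have i2 := integrableOn_pow_mul_exp_neg_mul_Ioi 1 ht
  have hi : IntegrableOn (fun s => Real.exp (-(t * s)) * levyKernel s u) (Ioi 0) := by
    simp only [e]
    exact ((i0.sub i1).add (i2.const_mul u)).const_mul _
  have hv : ∫ s in Ioi (0 : ℝ), Real.exp (-(t * s)) * levyKernel s u =
      1 / t ^ 2 * (t + u)⁻¹ := by
    simp only [e]
    rw [integral_const_mul, integral_add (by exact i0.sub i1) (i2.const_mul u), integral_sub i0 i1,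
      integral_const_mul, integral_pow_mul_exp_neg_mul_Ioi 0 htu,
      integral_pow_mul_exp_neg_mul_Ioi 0 ht, integral_pow_mul_exp_neg_mul_Ioi 1 ht]
    simp only [Nat.factorial, Nat.cast_one]
    field_simp
    ring
  rw [← hv, ofReal_integral_eq_lintegral_ofReal hi
    (ae_of_all _ fun s => mul_nonneg (Real.exp_pos _).le (levyKernel_nonneg s u))]
  exact lintegral_congr fun s => (ENNReal.ofReal_mul (Real.exp_pos _).le).symm

/-- If `M` has Laplace transform `e^{-tφ}` and `Ψ` is inverse to `φ`, then the Laplace transform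
of `Ψ ^ p` at `t` is a multiple of the moment of order `-p` of `M`. -/
theorem lintegral_exp_neg_mul_mul_inverse_rpow {p t : ℝ} (hp : 0 < p) (ht : 0 < t) {φ Ψ : ℝ → ℝ}
    (hφ : MonotoneOn φ (Ici 0)) (hφ0 : ∀ l, 0 ≤ l → 0 ≤ φ l) (hΨ0 : ∀ s, 0 ≤ s → 0 ≤ Ψ s)
    (hgc : ∀ l s, 0 ≤ l → 0 ≤ s → (φ l < s ↔ l < Ψ s))
    {M : Measure ℝ} [IsProbabilityMeasure M] (hM : ∀ᵐ x ∂M, 0 < x)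
    (hlap : ∀ l : ℝ, 0 ≤ l → ∫ x, Real.exp (-l * x) ∂M = Real.exp (-t * φ l)) :
    ∫⁻ s in Ioi (0 : ℝ), ENNReal.ofReal (Real.exp (-(t * s))) * ENNReal.ofReal (Ψ s ^ p) =
      ENNReal.ofReal (Real.Gamma (p + 1) / t) * ∫⁻ x, ENNReal.ofReal (x ^ (-p)) ∂M := by
  have hΓ : 0 < Real.Gamma p := Real.Gamma_pos_of_pos hp
  have hmax : Measurable fun l : ℝ => φ (max l 0) := by
    refine Monotone.measurable fun a b hab =>
      hφ (mem_Ici.2 (le_max_right _ _)) (mem_Ici.2 (le_max_right _ _)) ?_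
    exact max_le_max_right _ hab
  -- the Gamma integral
  have h1 : ENNReal.ofReal (Real.Gamma p) * ∫⁻ x, ENNReal.ofReal (x ^ (-p)) ∂M =
      ∫⁻ x, (∫⁻ l in Ioi (0 : ℝ), ENNReal.ofReal (l ^ (p - 1) * Real.exp (-(x * l)))) ∂M := by
    rw [← lintegral_const_mul' _ _ ENNReal.ofReal_ne_top]
    refine lintegral_congr_ae ?_
    filter_upwards [hM] with x hx
    have hv := Real.integral_rpow_mul_exp_neg_mul_Ioi hp hx
    rw [← ENNReal.ofReal_mul hΓ.le, ← ofReal_integral_eq_lintegral_ofReal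
      (Integrable.of_integral_ne_zero (by rw [hv]; positivity)), hv, one_div,
      Real.inv_rpow hx.le, Real.rpow_neg hx.le, mul_comm]
    filter_upwards [ae_restrict_mem measurableSet_Ioi] with l hl
    have : (0 : ℝ) < l := hl
    positivity
  have h2 : ∫⁻ x, (∫⁻ l in Ioi (0 : ℝ), ENNReal.ofReal (l ^ (p - 1) * Real.exp (-(x * l)))) ∂M =
      ∫⁻ l in Ioi (0 : ℝ), ENNReal.ofReal (l ^ (p - 1) * Real.exp (-t * φ l)) := by
    rw [lintegral_lintegral_swap (by fun_prop)]
    refine setLIntegral_congr_fun measurableSet_Ioi fun l hl => ?_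
    have hl : (0 : ℝ) < l := hl
    have hi : Integrable (fun x => Real.exp (-l * x)) M :=
      Integrable.of_integral_ne_zero (by rw [hlap l hl.le]; exact (Real.exp_pos _).ne')
    rw [← hlap l hl.le, ← integral_const_mul, ofReal_integral_eq_lintegral_ofReal
      (hi.const_mul _) (ae_of_all _ fun x => by positivity)]
    refine lintegral_congr fun x => ?_
    ring_nf
  have h3 : ∫⁻ l in Ioi (0 : ℝ), ENNReal.ofReal (l ^ (p - 1) * Real.exp (-t * φ l)) =
      ∫⁻ l in Ioi (0 : ℝ), ∫⁻ s in Ioi (0 : ℝ), if φ (max l 0) < s then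
        ENNReal.ofReal (l ^ (p - 1)) * ENNReal.ofReal (t * Real.exp (-(t * s))) else 0 := by
    refine setLIntegral_congr_fun measurableSet_Ioi fun l hl => ?_
    have hl : (0 : ℝ) < l := hl
    have hv := integral_exp_mul_Ioi (neg_lt_zero.2 ht) (φ l)
    have hi := integrableOn_exp_mul_Ioi (neg_lt_zero.2 ht) (φ l)
    have hset : ∀ s : ℝ, (if φ (max l 0) < s then
        ENNReal.ofReal (l ^ (p - 1)) * ENNReal.ofReal (t * Real.exp (-(t * s))) else 0) =
        (Ioi (φ l)).indicator (fun s => ENNReal.ofReal (l ^ (p - 1)) *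
          ENNReal.ofReal (t * Real.exp (-t * s))) s := by
      intro s
      simp [indicator_apply, max_eq_left hl.le]
    simp only [hset]
    rw [setLIntegral_indicator measurableSet_Ioi,
      inter_eq_left.2 (Ioi_subset_Ioi (hφ0 l hl.le)),
      lintegral_const_mul' _ _ ENNReal.ofReal_ne_top,
      ← ofReal_integral_eq_lintegral_ofReal (hi.const_mul t)
        (ae_of_all _ fun s => by positivity), integral_const_mul, hv,
      ENNReal.ofReal_mul (by positivity)]
    congr 2
    field_simp
  have h4 : (∫⁻ l in Ioi (0 : ℝ), ∫⁻ s in Ioi (0 : ℝ), if φ (max l 0) < s then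
        ENNReal.ofReal (l ^ (p - 1)) * ENNReal.ofReal (t * Real.exp (-(t * s))) else 0) =
      ∫⁻ s in Ioi (0 : ℝ), ENNReal.ofReal (t / p) *
        (ENNReal.ofReal (Real.exp (-(t * s))) * ENNReal.ofReal (Ψ s ^ p)) := by
    rw [lintegral_lintegral_swap]
    swap
    · refine Measurable.aemeasurable (Measurable.ite
        (measurableSet_lt (hmax.comp measurable_fst) measurable_snd) ?_ measurable_const)
      fun_prop
    refine setLIntegral_congr_fun measurableSet_Ioi fun s hs => ?_
    have hs : (0 : ℝ) < s := hs
    have hset : ∫⁻ l in Ioi (0 : ℝ), (if φ (max l 0) < s then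
        ENNReal.ofReal (l ^ (p - 1)) * ENNReal.ofReal (t * Real.exp (-(t * s))) else 0) =
        ∫⁻ l in Ioi (0 : ℝ), (Iio (Ψ s)).indicator (fun l => ENNReal.ofReal (l ^ (p - 1)) *
          ENNReal.ofReal (t * Real.exp (-(t * s)))) l := by
      refine setLIntegral_congr_fun measurableSet_Ioi fun l hl => ?_
      have hl : (0 : ℝ) < l := hl
      simp [indicator_apply, max_eq_left hl.le, hgc l s hl.le hs.le]
    have hi : IntegrableOn (fun l : ℝ => l ^ (p - 1)) (Ioc 0 (Ψ s)) :=
      (intervalIntegrable_iff_integrableOn_Ioc_of_le (hΨ0 s hs.le)).1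
        (intervalIntegral.intervalIntegrable_rpow' (by linarith))
    have hv : ∫ l in Ioc 0 (Ψ s), l ^ (p - 1) = Ψ s ^ p / p := by
      rw [← intervalIntegral.integral_of_le (hΨ0 s hs.le),
        integral_rpow (Or.inl (by linarith)), sub_add_cancel, Real.zero_rpow hp.ne', sub_zero]
    simp only [hset]
    rw [setLIntegral_indicator measurableSet_Iio, inter_comm, Ioi_inter_Iio,
      lintegral_mul_const' _ _ ENNReal.ofReal_ne_top,
      setLIntegral_congr Ioo_ae_eq_Ioc, ← ofReal_integral_eq_lintegral_ofReal hi, hv,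
      ← ENNReal.ofReal_mul, ← ENNReal.ofReal_mul (Real.exp_pos _).le,
      ← ENNReal.ofReal_mul (by positivity)]
    · congr 1
      ring
    · have := Real.rpow_nonneg (hΨ0 s hs.le) p
      positivity
    · filter_upwards [ae_restrict_mem measurableSet_Ioc] with l hl
      exact Real.rpow_nonneg hl.1.le _
  have h5 := h1.trans (h2.trans (h3.trans h4))
  rw [lintegral_const_mul' _ _ ENNReal.ofReal_ne_top] at h5
  rw [Real.Gamma_add_one hp.ne', show p * Real.Gamma p / t = p / t * Real.Gamma p by ring,
    ENNReal.ofReal_mul (by positivity), mul_assoc, h5, ← mul_assoc,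
    ← ENNReal.ofReal_mul (by positivity), show p / t * (t / p) = 1 by field_simp,
    ENNReal.ofReal_one, one_mul]

theorem integrable_one_add_inv {Δ : Measure ℝ} (hΔ : ∀ᵐ u ∂Δ, 0 < u)
    (hfin : (∫⁻ u, ENNReal.ofReal ((1 + u)⁻¹) ∂Δ) < ⊤) :
    Integrable (fun u : ℝ => (1 + u)⁻¹) Δ :=
  (lintegral_ofReal_ne_top_iff_integrable (by fun_prop) (by
    filter_upwards [hΔ] with u hu
    positivity)).1 hfin.ne

theorem sFinite_of_lintegral_one_add_inv {Δ : Measure ℝ} (hΔ : ∀ᵐ u ∂Δ, 0 < u)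
    (hfin : (∫⁻ u, ENNReal.ofReal ((1 + u)⁻¹) ∂Δ) < ⊤) :
    SFinite Δ := by
  have := isFiniteMeasure_withDensity hfin.ne
  refine sFinite_of_absolutelyContinuous (withDensity_absolutelyContinuous'
    (μ := Δ) (f := fun u => ENNReal.ofReal ((1 + u)⁻¹)) (by fun_prop) ?_)
  filter_upwards [hΔ] with u hu
  have : 0 < (1 + u)⁻¹ := by positivity
  simpa using this

theorem integrable_levyKernel {Δ : Measure ℝ} (hΔ : ∀ᵐ u ∂Δ, 0 < u)
    (hfin : (∫⁻ u, ENNReal.ofReal ((1 + u)⁻¹) ∂Δ) < ⊤)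
    {s : ℝ} (hs : 0 ≤ s) : Integrable (levyKernel s) Δ := by
  refine ((integrable_one_add_inv hΔ hfin).const_mul (s ^ 2 + s)).mono'
    (measurable_levyKernel.comp measurable_prodMk_left).aestronglyMeasurable ?_
  filter_upwards [hΔ] with u hu
  rw [Real.norm_of_nonneg (levyKernel_nonneg s u)]
  exact levyKernel_le hs hu

theorem integrable_inv_add {Δ : Measure ℝ} (hΔ : ∀ᵐ u ∂Δ, 0 < u)
    (hfin : (∫⁻ u, ENNReal.ofReal ((1 + u)⁻¹) ∂Δ) < ⊤)
    {t : ℝ} (ht : 0 < t) : Integrable (fun u : ℝ => (t + u)⁻¹) Δ := by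
  refine ((integrable_one_add_inv hΔ hfin).const_mul (1 + t⁻¹)).mono'
    (by fun_prop) ?_
  filter_upwards [hΔ] with u hu
  rw [Real.norm_of_nonneg (by positivity), ← div_eq_mul_inv, inv_eq_one_div,
    div_le_div_iff₀ (by positivity) (by positivity)]
  have : (1 + t⁻¹) * (t + u) = 1 + u + t + t⁻¹ * u := by
    field_simp; ring
  rw [this]
  have : 0 < t⁻¹ * u := by positivity
  linarith

theorem continuousOn_integral_levyKernel {Δ : Measure ℝ} (hΔ : ∀ᵐ u ∂Δ, 0 < u)
    (hfin : (∫⁻ u, ENNReal.ofReal ((1 + u)⁻¹) ∂Δ) < ⊤) :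
    ContinuousOn (fun s => ∫ u, levyKernel s u ∂Δ) (Ioi 0) := by
  intro s hs
  have hs : (0 : ℝ) < s := hs
  refine ContinuousAt.continuousWithinAt ?_
  refine continuousAt_of_dominated (bound := levyKernel (s + 1)) ?_ ?_
    (integrable_levyKernel hΔ hfin (by linarith)) (ae_of_all _ fun u => ?_)
  · exact Eventually.of_forall fun r =>
      (measurable_levyKernel.comp measurable_prodMk_left).aestronglyMeasurable
  · filter_upwards [Ioo_mem_nhds hs (lt_add_one s)] with r hr
    filter_upwards [hΔ] with u hu
    rw [Real.norm_of_nonneg (levyKernel_nonneg r u)]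
    exact levyKernel_mono hr.1.le hr.2.le hu
  · unfold levyKernel
    fun_prop

/-- The Laplace transform of `ds + qs²/2 + ∫ (e^{-su} - 1 + su) u⁻² Δ(du)`. -/
theorem lintegral_exp_neg_mul_mul_levy {Δ : Measure ℝ} (hΔ : ∀ᵐ u ∂Δ, 0 < u)
    (hfin : (∫⁻ u, ENNReal.ofReal ((1 + u)⁻¹) ∂Δ) < ⊤)
    {d q : ℝ} (hd : 0 ≤ d) (hq : 0 ≤ q) {t : ℝ} (ht : 0 < t) :
    ∫⁻ s in Ioi (0 : ℝ), ENNReal.ofReal (Real.exp (-(t * s))) *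
        ENNReal.ofReal (d * s + q / 2 * s ^ 2 + ∫ u, levyKernel s u ∂Δ) =
      ENNReal.ofReal (1 / t ^ 2 * (d + q / t + ∫ u, (t + u)⁻¹ ∂Δ)) := by
  have := sFinite_of_lintegral_one_add_inv hΔ hfin
  have hm : Measurable fun x : ℝ × ℝ => ENNReal.ofReal (Real.exp (-(t * x.1))) *
      ENNReal.ofReal (levyKernel x.1 x.2) := by
    have := measurable_levyKernel
    fun_prop
  have hk : ∫⁻ s in Ioi (0 : ℝ), ∫⁻ u, ENNReal.ofReal (Real.exp (-(t * s))) *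
      ENNReal.ofReal (levyKernel s u) ∂Δ =
      ENNReal.ofReal (1 / t ^ 2 * ∫ u, (t + u)⁻¹ ∂Δ) := by
    rw [lintegral_lintegral_swap hm.aemeasurable, ← integral_const_mul,
      ofReal_integral_eq_lintegral_ofReal ((integrable_inv_add hΔ hfin ht).const_mul _)]
    · refine lintegral_congr_ae ?_
      filter_upwards [hΔ] with u hu
      exact lintegral_exp_neg_mul_mul_levyKernel ht hu
    · filter_upwards [hΔ] with u hu
      positivity
  have hpos : 0 ≤ ∫ u, (t + u)⁻¹ ∂Δ := integral_nonneg_of_ae (by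
    filter_upwards [hΔ] with u hu
    positivity)
  have hsplit : ∀ s ∈ Ioi (0 : ℝ), ENNReal.ofReal (Real.exp (-(t * s))) *
        ENNReal.ofReal (d * s + q / 2 * s ^ 2 + ∫ u, levyKernel s u ∂Δ) =
      (ENNReal.ofReal d * (ENNReal.ofReal (Real.exp (-(t * s))) * ENNReal.ofReal (s ^ 1)) +
        ENNReal.ofReal (q / 2) *
          (ENNReal.ofReal (Real.exp (-(t * s))) * ENNReal.ofReal (s ^ 2))) +
        ∫⁻ u, ENNReal.ofReal (Real.exp (-(t * s))) * ENNReal.ofReal (levyKernel s u) ∂Δ := by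
    intro s hs
    have hs : (0 : ℝ) < s := hs
    rw [lintegral_const_mul' _ _ ENNReal.ofReal_ne_top, ← ofReal_integral_eq_lintegral_ofReal
      (integrable_levyKernel hΔ hfin hs.le) (ae_of_all _ (levyKernel_nonneg s)),
      ENNReal.ofReal_add (by positivity) (integral_nonneg (levyKernel_nonneg s)),
      ENNReal.ofReal_add (by positivity) (by positivity), ENNReal.ofReal_mul hd,
      ENNReal.ofReal_mul (by positivity), pow_one]
    ring
  rw [setLIntegral_congr_fun measurableSet_Ioi hsplit, lintegral_add_left (by fun_prop),
    lintegral_add_left (by fun_prop), lintegral_const_mul' _ _ ENNReal.ofReal_ne_top,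
    lintegral_const_mul' _ _ ENNReal.ofReal_ne_top, lintegral_exp_neg_mul_mul_pow 1 ht,
    lintegral_exp_neg_mul_mul_pow 2 ht, hk, ← ENNReal.ofReal_mul hd,
    ← ENNReal.ofReal_mul (by positivity), ← ENNReal.ofReal_add (by positivity) (by positivity),
    ← ENNReal.ofReal_add (by positivity) (by positivity)]
  congr 1
  simp only [Nat.factorial]
  push_cast
  field_simp

theorem integrable_div_one_add_sq {Δ : Measure ℝ} (hΔ : ∀ᵐ u ∂Δ, 0 < u)
    (hfin : (∫⁻ u, ENNReal.ofReal ((1 + u)⁻¹) ∂Δ) < ⊤) :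
    Integrable (fun u : ℝ => u / (1 + u ^ 2)) Δ := by
  refine ((integrable_one_add_inv hΔ hfin).const_mul 2).mono'
    (Measurable.aestronglyMeasurable (by fun_prop)) ?_
  filter_upwards [hΔ] with u hu
  rw [Real.norm_of_nonneg (by positivity), ← div_eq_mul_inv,
    div_le_div_iff₀ (by positivity) (by positivity)]
  nlinarith [sq_nonneg (u - 1)]

theorem lintegral_min_sq_one_withDensity_lt_top {Δ : Measure ℝ} (hΔ : ∀ᵐ u ∂Δ, 0 < u)
    (hfin : (∫⁻ u, ENNReal.ofReal ((1 + u)⁻¹) ∂Δ) < ⊤)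
    {c : ℝ} (hc : 0 ≤ c) :
    ∫⁻ x, ENNReal.ofReal (min (x ^ 2) 1) ∂(Δ.withDensity fun u => ENNReal.ofReal (c / u ^ 2)) <
      ⊤ := by
  rw [lintegral_withDensity_eq_lintegral_mul _ (by fun_prop) (by fun_prop)]
  calc _ ≤ ∫⁻ u, ENNReal.ofReal (2 * c) * ENNReal.ofReal ((1 + u)⁻¹) ∂Δ := by
        refine lintegral_mono_ae ?_
        filter_upwards [hΔ] with u hu
        rw [Pi.mul_apply, ← ENNReal.ofReal_mul (by positivity),
          ← ENNReal.ofReal_mul (by positivity)]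
        refine ENNReal.ofReal_le_ofReal ?_
        have key : min (u ^ 2) 1 / u ^ 2 ≤ 2 * (1 + u)⁻¹ := by
          rw [← div_eq_mul_inv, div_le_div_iff₀ (by positivity) (by positivity)]
          rcases le_total u 1 with h | h
          · rw [min_eq_left (by nlinarith)]
            nlinarith [sq_nonneg u]
          · rw [min_eq_right (by nlinarith)]
            nlinarith
        calc c / u ^ 2 * min (u ^ 2) 1 = c * (min (u ^ 2) 1 / u ^ 2) := by ring
          _ ≤ c * (2 * (1 + u)⁻¹) := by gcongr
          _ = 2 * c * (1 + u)⁻¹ := by ring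
    _ < ⊤ := by
        rw [lintegral_const_mul' _ _ ENNReal.ofReal_ne_top]
        exact ENNReal.mul_lt_top ENNReal.ofReal_lt_top hfin

theorem integral_withDensity_levy {Δ : Measure ℝ} (hΔ : ∀ᵐ u ∂Δ, 0 < u)
    (hfin : (∫⁻ u, ENNReal.ofReal ((1 + u)⁻¹) ∂Δ) < ⊤)
    {c l : ℝ} (hc : 0 ≤ c) (hl : 0 ≤ l) :
    ∫ x, (Real.exp (-l * x) - 1 + l * x / (1 + x ^ 2))
        ∂(Δ.withDensity fun u => ENNReal.ofReal (c / u ^ 2)) =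
      c * ∫ u, levyKernel l u ∂Δ - c * (∫ u, u / (1 + u ^ 2) ∂Δ) * l := by
  rw [integral_withDensity_eq_integral_toReal_smul (by fun_prop)
    (ae_of_all _ fun _ => ENNReal.ofReal_lt_top), ← integral_const_mul, mul_right_comm,
    ← integral_const_mul, ← integral_sub ((integrable_levyKernel hΔ hfin hl).const_mul c)
      ((integrable_div_one_add_sq hΔ hfin).const_mul _)]
  refine integral_congr_ae ?_
  filter_upwards [hΔ] with u hu
  rw [ENNReal.toReal_ofReal (by positivity), levyKernel, smul_eq_mul, neg_mul]
  field_simp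
  ring

/-- A function on `[0,∞)` whose negative exponential is the Laplace transform of a probability
measure on `(0,∞)` is nonnegative, monotone and continuous. -/
theorem laplaceExponent_nonneg_monotoneOn_continuousOn {φ : ℝ → ℝ} {M : Measure ℝ}
    [IsProbabilityMeasure M] (hM : ∀ᵐ x ∂M, 0 < x)
    (hlap : ∀ l : ℝ, 0 ≤ l → ∫ x, Real.exp (-l * x) ∂M = Real.exp (-φ l)) :
    (∀ l, 0 ≤ l → 0 ≤ φ l) ∧ MonotoneOn φ (Ici 0) ∧ ContinuousOn φ (Ici 0) := by
  have hi : ∀ l : ℝ, 0 ≤ l → Integrable (fun x => Real.exp (-l * x)) M := fun l hl =>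
    Integrable.of_integral_ne_zero (by rw [hlap l hl]; exact (Real.exp_pos _).ne')
  have hmono : MonotoneOn φ (Ici 0) := by
    intro a ha b hb hab
    have : Real.exp (-φ b) ≤ Real.exp (-φ a) := by
      rw [← hlap a ha, ← hlap b hb]
      refine integral_mono_ae (hi b hb) (hi a ha) ?_
      filter_upwards [hM] with x hx
      exact Real.exp_le_exp.2 (by nlinarith)
    linarith [Real.exp_le_exp.1 this]
  have hzero : φ 0 = 0 := by
    have := hlap 0 le_rfl
    simp only [neg_zero, zero_mul, Real.exp_zero, integral_const, probReal_univ, one_smul] at this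
    linarith [Real.exp_eq_one_iff _ |>.1 this.symm]
  refine ⟨fun l hl => ?_, hmono, ?_⟩
  · rw [← hzero]
    exact hmono self_mem_Ici hl hl
  · have hcont : ContinuousOn (fun l : ℝ => ∫ x, Real.exp (-l * x) ∂M) (Ici 0) := by
      refine continuousOn_of_dominated (bound := fun _ => 1) (fun l _ => by fun_prop) ?_
        (integrable_const 1) (ae_of_all _ fun x => by fun_prop)
      intro l hl
      filter_upwards [hM] with x hx
      rw [Real.norm_of_nonneg (Real.exp_pos _).le, Real.exp_le_one_iff, neg_mul, neg_nonpos]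
      exact mul_nonneg hl hx.le
    have heq : EqOn φ (fun l => -Real.log (∫ x, Real.exp (-l * x) ∂M)) (Ici 0) := by
      intro l hl
      simp only
      rw [hlap l hl, Real.log_exp, neg_neg]
    refine ContinuousOn.congr (ContinuousOn.neg (hcont.log fun l hl => ?_)) heq
    rw [hlap l hl]
    exact (Real.exp_pos _).ne'

/-- Let `p ≥ 1`, let `φ` be a Bernstein function with `φ(0) = 0`,
`φ(∞) = ∞`, inverse `Ψ`, and marginal subordinator laws `(μ_t)_{t>0}`. If
`t ↦ t·∫ x^{−p} μ_t(dx)` is a Stieltjes transform on `(0,∞)`, then `Ψ^p ∈ Lle(0,∞)`: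
`Ψ(λ)^p = βλ + (γ²/2)λ² + ∫_{(0,∞)} (e^{−λx} − 1 + λx/(1+x²)) ν(dx)` for some `γ ≥ 0`,
`β ∈ ℝ` and a measure `ν` on `(0,∞)` with `∫ min(x²,1) ν(dx) < ∞`. -/
theorem stmt_11 (p : ℝ) (hp : 1 ≤ p) (φ Ψ : ℝ → ℝ) (hφ : IsBernsteinFn φ)
    (h0 : φ 0 = 0) (hinf : Tendsto φ atTop atTop) (hinv : Set.InvOn Ψ φ (Ici 0) (Ici 0))
    (μ : ℝ → Measure ℝ) (hprob : ∀ t : ℝ, 0 < t → IsProbabilityMeasure (μ t))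
    (hsupp : ∀ t : ℝ, 0 < t → μ t {x | x ≤ 0} = 0)
    (hlaplace : ∀ t : ℝ, 0 < t → ∀ l : ℝ, 0 ≤ l →
      ∫ x, Real.exp (-l * x) ∂(μ t) = Real.exp (-t * φ l))
    (hfin : ∀ t : ℝ, 0 < t → ∫⁻ x, ENNReal.ofReal (x ^ (-p)) ∂(μ t) ≠ ⊤)
    (hstieltjes :
      IsStieltjesFn (fun t => t * (∫⁻ x, ENNReal.ofReal (x ^ (-p)) ∂(μ t)).toReal)) :
    ∃ β γ : ℝ, 0 ≤ γ ∧ ∃ ν : Measure ℝ, ν {x | x ≤ 0} = 0 ∧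
      (∫⁻ x, ENNReal.ofReal (min (x ^ 2) 1) ∂ν) < ⊤ ∧
      ∀ l : ℝ, 0 ≤ l →
        Ψ l ^ p = β * l + γ ^ 2 / 2 * l ^ 2 +
          ∫ x, (Real.exp (-l * x) - 1 + l * x / (1 + x ^ 2)) ∂ν := by
  have hpos : ∀ t : ℝ, 0 < t → ∀ᵐ x ∂(μ t), 0 < x := fun t ht => by
    simpa [ae_iff] using hsupp t ht
  have hp0 : 0 < p := by linarith
  have hprob1 := hprob 1 one_pos
  obtain ⟨hφ0, hmono, hcont⟩ := laplaceExponent_nonneg_monotoneOn_continuousOn (hpos 1 one_pos)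
    (φ := φ) fun l hl => by simpa using hlaplace 1 one_pos l hl
  -- `φ` is onto `[0,∞)`, hence `Ψ` is nonnegative there
  have hsurj : ∀ s, 0 ≤ s → ∃ l, 0 ≤ l ∧ φ l = s := by
    intro s hs
    obtain ⟨b, hb0, hb⟩ := ((eventually_ge_atTop 0).and (hinf.eventually_ge_atTop s)).exists
    obtain ⟨l, hl, hls⟩ := intermediate_value_Icc hb0 (hcont.mono Icc_subset_Ici_self)
      (⟨h0.trans_le hs, hb⟩ : s ∈ Icc (φ 0) (φ b))
    exact ⟨l, hl.1, hls⟩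
  have hΨ0 : ∀ s, 0 ≤ s → 0 ≤ Ψ s := by
    intro s hs
    obtain ⟨l, hl, rfl⟩ := hsurj s hs
    rwa [hinv.1 hl]
  have hstrict : StrictMonoOn φ (Ici 0) := hmono.strictMonoOn_of_injOn hinv.1.injOn
  have hgc : ∀ l s, 0 ≤ l → 0 ≤ s → (φ l < s ↔ l < Ψ s) := by
    intro l s hl hs
    conv_lhs => rw [← hinv.2 hs]
    exact hstrict.lt_iff_lt hl (hΨ0 s hs)
  have hΨmono : MonotoneOn Ψ (Ici 0) := by
    intro a ha b hb hab
    refine (hstrict.le_iff_le (hΨ0 a ha) (hΨ0 b hb)).1 ?_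
    rwa [hinv.2 ha, hinv.2 hb]
  have hΨzero : Ψ 0 = 0 := by
    conv_lhs => rw [← h0]
    exact hinv.1 self_mem_Ici
  have hΨpos : ∀ s, 0 < s → 0 < Ψ s := fun s hs => (hgc 0 s le_rfl hs.le).1 (by rwa [h0])
  have hΨcont : ContinuousOn Ψ (Ioi 0) := by
    intro s hs
    refine (continuousAt_of_monotoneOn_of_image_mem_nhds hΨmono (Ici_mem_nhds hs)
      (mem_of_superset (Ici_mem_nhds (hΨpos s hs)) fun l hl => ?_)).continuousWithinAt
    exact ⟨φ l, hφ0 l hl, hinv.1 hl⟩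
  obtain ⟨d, q, hd, hq, Δ, hΔ, hΔfin, hS⟩ := hstieltjes
  have hΔpos : ∀ᵐ u ∂Δ, 0 < u := by simpa [ae_iff] using hΔ
  set c := Real.Gamma (p + 1)
  have hc : 0 < c := Real.Gamma_pos_of_pos (by linarith)
  set H : ℝ → ℝ := fun s => d * s + q / 2 * s ^ 2 + ∫ u, levyKernel s u ∂Δ with hHdef
  have hH0 : ∀ s, 0 < s → 0 ≤ H s := fun s hs => by
    have : 0 ≤ ∫ u, levyKernel s u ∂Δ := integral_nonneg (levyKernel_nonneg s)
    positivity
  have hFcont : ContinuousOn (fun s => Ψ s ^ p) (Ioi 0) :=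
    hΨcont.rpow_const fun s _ => Or.inr hp0.le
  have hHcont : ContinuousOn (fun s => c * H s) (Ioi 0) :=
    continuousOn_const.mul (ContinuousOn.add (by fun_prop)
      (continuousOn_integral_levyKernel hΔpos hΔfin))
  have hlapF : ∀ t : ℝ, 0 < t →
      ∫⁻ s in Ioi (0 : ℝ), ENNReal.ofReal (Real.exp (-(t * s))) * ENNReal.ofReal (Ψ s ^ p) =
      ENNReal.ofReal (c / t) * ∫⁻ x, ENNReal.ofReal (x ^ (-p)) ∂(μ t) := fun t ht => by
    have := hprob t ht
    exact lintegral_exp_neg_mul_mul_inverse_rpow hp0 ht hmono hφ0 hΨ0 hgc (hpos t ht)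
      (hlaplace t ht)
  have hae := ae_eq_of_laplace_eq (F := fun s => ENNReal.ofReal (Ψ s ^ p))
    (G := fun s => ENNReal.ofReal (c * H s))
    (hFcont.aemeasurable measurableSet_Ioi).ennreal_ofReal
    (hHcont.aemeasurable measurableSet_Ioi).ennreal_ofReal
    (fun t ht => by
      rw [hlapF t ht]
      exact ENNReal.mul_ne_top ENNReal.ofReal_ne_top (hfin t ht))
    (fun t ht => by
      have hSt := hS t ht
      simp only at hSt
      simp_rw [ENNReal.ofReal_mul hc.le, mul_left_comm _ (ENNReal.ofReal c)]
      rw [lintegral_const_mul' _ _ ENNReal.ofReal_ne_top,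
        lintegral_exp_neg_mul_mul_levy hΔpos hΔfin hd hq ht, ← hSt, hlapF t ht,
        ← ENNReal.ofReal_mul hc.le]
      conv_lhs => rw [← ENNReal.ofReal_toReal (hfin t ht)]
      rw [← ENNReal.ofReal_mul (by positivity)]
      congr 1
      field_simp)
  have hEq : EqOn (fun s => Ψ s ^ p) (fun s => c * H s) (Ioi 0) := by
    refine Measure.eqOn_open_of_ae_eq (μ := volume) ?_ isOpen_Ioi hFcont hHcont
    filter_upwards [hae, ae_restrict_mem measurableSet_Ioi] with s hs hs0
    exact (ENNReal.ofReal_eq_ofReal_iff (Real.rpow_nonneg (hΨ0 s (le_of_lt hs0)) p)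
      (mul_nonneg hc.le (hH0 s hs0))).1 hs
  refine ⟨c * d + c * ∫ u, u / (1 + u ^ 2) ∂Δ, √(c * q), Real.sqrt_nonneg _,
    Δ.withDensity fun u => ENNReal.ofReal (c / u ^ 2),
    withDensity_absolutelyContinuous _ _ hΔ,
    lintegral_min_sq_one_withDensity_lt_top hΔpos hΔfin hc.le, fun l hl => ?_⟩
  rcases hl.eq_or_lt with rfl | hl
  · simp [hΨzero, Real.zero_rpow hp0.ne']
  · have hl' : Ψ l ^ p = c * H l := hEq hl
    rw [integral_withDensity_levy hΔpos hΔfin hc.le hl.le, Real.sq_sqrt (by positivity), hl']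
    simp only [hHdef]
    ring
end

section
/- For every s > 0, 2·∫₀^∞ cos(s x) · x / ((1+x²)·(e^{πx} − 1)) dx = (e^{−s}·Ei(s) − e^{s}·E₁(s))/2 + cosh(s)·log((1 + e^{−s})/(1 − e^{−s})) − 1. Moreover, at s = 0, 2·∫₀^∞ x / ((1+x²)·(e^{πx} − 1)) dx = γ + log 2 − 1. -/
open MeasureTheory Set

/-- The exponential integral `E₁(x) = ∫_x^∞ e^{−t}/t dt` for `x > 0`. -/
noncomputable def expIntegralE1 (x : ℝ) : ℝ :=
  ∫ t in Ioi x, Real.exp (-t) / t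

/-- The principal-value exponential integral
`Ei(x) = γ + log x + Σ_{k≥1} x^k/(k·k!)` for `x > 0`. -/
noncomputable def expIntegralEi (x : ℝ) : ℝ :=
  Real.eulerMascheroniConstant + Real.log x +
    ∑' k : ℕ, x ^ (k + 1) / ((k + 1) * (Nat.factorial (k + 1)))

open Filter Topology

section LaplaceTransform

theorem integral_exp_neg_mul_mul_sin {a : ℝ} (ha : 0 < a) (b : ℝ) :
    ∫ t in Ioi (0 : ℝ), Real.exp (-(a * t)) * Real.sin (b * t) = b / (a ^ 2 + b ^ 2) := by
  have hab : a ^ 2 + b ^ 2 ≠ 0 := by positivity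
  have hexp : Tendsto (fun t : ℝ => Real.exp (-(a * t))) atTop (𝓝 0) :=
    Real.tendsto_exp_neg_atTop_nhds_zero.comp (tendsto_id.const_mul_atTop ha)
  have hint : IntegrableOn (fun t : ℝ => Real.exp (-(a * t)) * Real.sin (b * t)) (Ioi 0) := by
    refine (exp_neg_integrableOn_Ioi 0 ha).mono' (by fun_prop) (ae_of_all _ fun t => ?_)
    rw [norm_mul, Real.norm_eq_abs, Real.abs_exp, neg_mul]
    exact mul_le_of_le_one_right (Real.exp_pos _).le (Real.abs_sin_le_one _)
  have hderiv : ∀ t ∈ Ici (0 : ℝ), HasDerivAt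
      (fun t : ℝ => -(Real.exp (-(a * t)) * (a * Real.sin (b * t) + b * Real.cos (b * t)))
        / (a ^ 2 + b ^ 2)) (Real.exp (-(a * t)) * Real.sin (b * t)) t := by
    intro t _
    have h1 : HasDerivAt (fun t : ℝ => a * t) a t := by simpa using (hasDerivAt_id t).const_mul a
    have h2 : HasDerivAt (fun t : ℝ => b * t) b t := by simpa using (hasDerivAt_id t).const_mul b
    convert! (((h1.fun_neg.exp.fun_mul ((h2.sin.const_mul a).fun_add
      (h2.cos.const_mul b))).fun_neg.div_const (a ^ 2 + b ^ 2))) using 1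
    field_simp
    ring
  have hlim : Tendsto
      (fun t : ℝ => -(Real.exp (-(a * t)) * (a * Real.sin (b * t) + b * Real.cos (b * t)))
        / (a ^ 2 + b ^ 2)) atTop (𝓝 0) := by
    have : Tendsto (fun t : ℝ => Real.exp (-(a * t)) *
        (a * Real.sin (b * t) + b * Real.cos (b * t))) atTop (𝓝 0) := by
      refine squeeze_zero_norm (a := fun t => Real.exp (-(a * t)) * (|a| + |b|)) (fun t => ?_)
        (by simpa using hexp.mul_const (|a| + |b|))
      rw [norm_mul, Real.norm_eq_abs, Real.abs_exp]
      gcongr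
      refine (norm_add_le _ _).trans ?_
      rw [norm_mul, norm_mul]
      exact add_le_add (mul_le_of_le_one_right (abs_nonneg _) (Real.abs_sin_le_one _))
        (mul_le_of_le_one_right (abs_nonneg _) (Real.abs_cos_le_one _))
    simpa using this.neg.div_const (a ^ 2 + b ^ 2)
  rw [integral_Ioi_of_hasDerivAt_of_tendsto' hderiv hint hlim]
  simp [neg_div]

end LaplaceTransform

section BoseKernel

theorem exp_sub_one_ge_mul_exp_half {y : ℝ} (hy : 0 ≤ y) :
    y * Real.exp (y / 2) ≤ Real.exp y - 1 := by
  have h := Real.self_le_sinh_iff.2 (div_nonneg hy zero_le_two)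
  have h2 : Real.exp y = Real.exp (y / 2) * Real.exp (y / 2) := by rw [← Real.exp_add, add_halves]
  have h3 : Real.exp (y / 2) * Real.exp (-(y / 2)) = 1 := by rw [← Real.exp_add]; simp
  rw [Real.sinh_eq] at h
  nlinarith [Real.exp_pos (y / 2)]

theorem integrableOn_div_exp_pi_mul_sub_one :
    IntegrableOn (fun x : ℝ => x / (Real.exp (Real.pi * x) - 1)) (Ioi 0) := by
  refine ((exp_neg_integrableOn_Ioi 0 (half_pos Real.pi_pos)).const_mul (1 / Real.pi)).mono'
    (by fun_prop : Measurable _).aestronglyMeasurable ?_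
  filter_upwards [ae_restrict_mem measurableSet_Ioi] with x (hx : 0 < x)
  have hpx : 0 < Real.pi * x := by positivity
  have h := exp_sub_one_ge_mul_exp_half hpx.le
  have hpos : 0 < Real.exp (Real.pi * x) - 1 := by simpa using hpx
  rw [Real.norm_of_nonneg (by positivity), div_le_iff₀ hpos, neg_mul, Real.exp_neg]
  calc x = 1 / Real.pi * (Real.exp (Real.pi / 2 * x))⁻¹ *
        (Real.pi * x * Real.exp (Real.pi * x / 2)) := by
        rw [div_mul_eq_mul_div]; field_simp
    _ ≤ _ := by gcongr

theorem abs_sin_mul_div_le (u : ℝ) {x d : ℝ} (hx : 0 ≤ x) (hd : 0 ≤ d) :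
    |Real.sin (u * x) / d| ≤ |u| * (x / d) := by
  rw [abs_div, abs_of_nonneg hd, ← mul_div_assoc]
  gcongr
  simpa [abs_mul, abs_of_nonneg hx] using Real.abs_sin_le_abs (x := u * x)

theorem exp_pi_mul_sub_one_pos {x : ℝ} (hx : 0 < x) : 0 < Real.exp (Real.pi * x) - 1 := by
  simpa using mul_pos Real.pi_pos hx

theorem integrableOn_sin_div_exp_pi_mul_sub_one (u : ℝ) :
    IntegrableOn (fun x : ℝ => Real.sin (u * x) / (Real.exp (Real.pi * x) - 1)) (Ioi 0) := by
  refine (integrableOn_div_exp_pi_mul_sub_one.const_mul |u|).mono'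
    (by fun_prop : Measurable _).aestronglyMeasurable ?_
  filter_upwards [ae_restrict_mem measurableSet_Ioi] with x (hx : 0 < x)
  exact abs_sin_mul_div_le u hx.le (exp_pi_mul_sub_one_pos hx).le

theorem integral_mul_exp_neg_mul {r : ℝ} (hr : 0 < r) :
    ∫ x in Ioi (0 : ℝ), x * Real.exp (-(r * x)) = (1 / r) ^ 2 := by
  have h := Real.integral_rpow_mul_exp_neg_mul_Ioi zero_lt_two hr
  norm_num at h
  simpa using h

theorem integrableOn_mul_exp_neg_mul {r : ℝ} (hr : 0 < r) :
    IntegrableOn (fun x : ℝ => x * Real.exp (-(r * x))) (Ioi 0) := by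
  refine Integrable.of_integral_ne_zero ?_
  rw [integral_mul_exp_neg_mul hr]
  positivity

theorem hasSum_integral_sin_div_exp_pi_mul_sub_one (u : ℝ) :
    HasSum (fun n : ℕ => u / ((Real.pi * (n + 1)) ^ 2 + u ^ 2))
      (∫ x in Ioi (0 : ℝ), Real.sin (u * x) / (Real.exp (Real.pi * x) - 1)) := by
  have hr : ∀ n : ℕ, 0 < Real.pi * (n + 1) := fun n => by positivity
  have hbound : ∀ n : ℕ, ∀ x ∈ Ioi (0 : ℝ),
      ‖Real.exp (-(Real.pi * (n + 1) * x)) * Real.sin (u * x)‖ ≤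
        |u| * (x * Real.exp (-(Real.pi * (n + 1) * x))) := by
    intro n x hx
    have h : |Real.sin (u * x)| ≤ |u| * x := by
      simpa [abs_mul, abs_of_pos (mem_Ioi.1 hx)] using Real.abs_sin_le_abs (x := u * x)
    rw [norm_mul, Real.norm_eq_abs, Real.abs_exp, Real.norm_eq_abs]
    nlinarith [Real.exp_pos (-(Real.pi * (n + 1) * x))]
  have hint : ∀ n : ℕ, IntegrableOn
      (fun x : ℝ => Real.exp (-(Real.pi * (n + 1) * x)) * Real.sin (u * x)) (Ioi 0) := fun n =>
    ((integrableOn_mul_exp_neg_mul (hr n)).const_mul |u|).mono' (by fun_prop)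
      (ae_restrict_of_forall_mem measurableSet_Ioi (hbound n))
  have hsum : Summable fun n : ℕ => ∫ x in Ioi (0 : ℝ),
      ‖Real.exp (-(Real.pi * (n + 1) * x)) * Real.sin (u * x)‖ := by
    refine Summable.of_nonneg_of_le (fun n => integral_nonneg fun x => norm_nonneg _)
      (fun n => setIntegral_mono_on (hint n).norm
        ((integrableOn_mul_exp_neg_mul (hr n)).const_mul |u|) measurableSet_Ioi (hbound n)) ?_
    have h : Summable fun n : ℕ => (1 / ((n + 1 : ℕ) : ℝ) ^ 2) :=
      (summable_nat_add_iff 1).2 (Real.summable_one_div_nat_pow.2 one_lt_two)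
    refine (h.mul_left (|u| / Real.pi ^ 2)).congr fun n => ?_
    rw [integral_const_mul, integral_mul_exp_neg_mul (hr n)]
    push_cast
    field_simp
  convert! hasSum_integral_of_summable_integral_norm hint hsum using 1
  · funext n
    rw [integral_exp_neg_mul_mul_sin (hr n)]
  · refine setIntegral_congr_fun measurableSet_Ioi fun x hx => ?_
    have hpx : 0 < Real.pi * x := mul_pos Real.pi_pos hx
    have hgeom : HasSum (fun n : ℕ => Real.exp (-(Real.pi * x)) ^ n)
        (1 - Real.exp (-(Real.pi * x)))⁻¹ :=
      hasSum_geometric_of_lt_one (Real.exp_pos _).le (by simpa using hpx)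
    have hne : Real.exp (Real.pi * x) - 1 ≠ 0 := (exp_pi_mul_sub_one_pos hx).ne'
    refine HasSum.tsum_eq ?_ |>.symm
    convert! hgeom.mul_left (Real.exp (-(Real.pi * x)) * Real.sin (u * x)) using 1
    · funext n
      rw [← Real.exp_nat_mul, mul_right_comm (Real.exp _), ← Real.exp_add]
      ring_nf
    · rw [Real.exp_neg]
      field_simp

theorem tsum_div_pi_mul_sq_add_sq (u : ℝ) (hu : u ≠ 0) :
    ∑' n : ℕ, u / ((Real.pi * (n + 1)) ^ 2 + u ^ 2) =
      (Real.cosh u / Real.sinh u - 1 / u) / 2 := by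
  have hpi : (Real.pi : ℂ) ≠ 0 := by exact_mod_cast Real.pi_ne_zero
  have huc : (u : ℂ) ≠ 0 := by exact_mod_cast hu
  have hsinh : Complex.sinh u ≠ 0 := by
    exact_mod_cast (Real.sinh_ne_zero.2 hu : Real.sinh u ≠ 0)
  have hmem : (Complex.I * u / Real.pi : ℂ) ∈ Complex.integerComplement := by
    rw [Complex.mem_integerComplement_iff]
    rintro ⟨n, hn⟩
    have h := congrArg Complex.im hn
    rw [show (Complex.I * u / Real.pi : ℂ) = ((u / Real.pi : ℝ) : ℂ) * Complex.I by
      push_cast; ring] at h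
    simp only [Complex.intCast_im, Complex.im_ofReal_mul, Complex.I_im, mul_one] at h
    exact div_ne_zero hu Real.pi_ne_zero h.symm
  have hterm : ∀ n : ℕ, 1 / ((Complex.I * u / Real.pi : ℂ) - (n + 1)) +
      1 / ((Complex.I * u / Real.pi : ℂ) + (n + 1)) = (-2 * Complex.I * Real.pi) *
        ((u / ((Real.pi * (n + 1)) ^ 2 + u ^ 2) : ℝ) : ℂ) := by
    intro n
    have hne : ((Real.pi * (n + 1)) ^ 2 + u ^ 2 : ℂ) ≠ 0 := by
      have : (Real.pi * (n + 1)) ^ 2 + u ^ 2 ≠ 0 := by positivity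
      exact_mod_cast this
    have hfac : ((Real.pi * (n + 1)) ^ 2 + u ^ 2 : ℂ) =
        -((Complex.I * u - Real.pi * (n + 1)) * (Complex.I * u + Real.pi * (n + 1))) := by
      linear_combination (u ^ 2 : ℂ) * Complex.I_sq
    have h1 : (Complex.I * u - Real.pi * (n + 1) : ℂ) ≠ 0 := by
      intro h; rw [hfac, h] at hne; simp at hne
    have h2 : (Complex.I * u + Real.pi * (n + 1) : ℂ) ≠ 0 := by
      intro h; rw [hfac, h] at hne; simp at hne
    have e1 : (Complex.I * u / Real.pi : ℂ) - (n + 1) =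
        (Complex.I * u - Real.pi * (n + 1)) / Real.pi := by field_simp
    have e2 : (Complex.I * u / Real.pi : ℂ) + (n + 1) =
        (Complex.I * u + Real.pi * (n + 1)) / Real.pi := by field_simp
    rw [e1, e2]
    push_cast
    rw [hfac]
    field_simp
    ring
  have h := cot_series_rep' hmem
  rw [tsum_congr hterm, tsum_mul_left, ← Complex.ofReal_tsum,
    mul_div_cancel₀ _ hpi, Complex.cot_eq_cos_div_sin, mul_comm Complex.I, Complex.cos_mul_I,
    Complex.sin_mul_I] at h
  have hI := Complex.I_ne_zero
  have key : ((∑' n : ℕ, u / ((Real.pi * (n + 1)) ^ 2 + u ^ 2) : ℝ) : ℂ) =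
      (Complex.cosh u / Complex.sinh u - 1 / u) / 2 := by
    refine mul_left_cancel₀ (mul_ne_zero (mul_ne_zero (by simp : (-2 : ℂ) ≠ 0) hI) hpi) ?_
    rw [← h]
    field_simp
    linear_combination (Complex.cosh u * u - Complex.sinh u) * Complex.I_sq
  exact_mod_cast key

theorem integral_sin_div_exp_pi_mul_sub_one (u : ℝ) :
    ∫ x in Ioi (0 : ℝ), Real.sin (u * x) / (Real.exp (Real.pi * x) - 1) =
      (Real.cosh u / Real.sinh u - 1 / u) / 2 := by
  rcases eq_or_ne u 0 with rfl | hu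
  · simp
  · rw [← tsum_div_pi_mul_sq_add_sq u hu, (hasSum_integral_sin_div_exp_pi_mul_sub_one u).tsum_eq]

end BoseKernel

section ExponentialIntegrals

theorem integral_log_mul_exp_neg :
    ∫ t in Ioi (0 : ℝ), Real.log t * Real.exp (-t) = -Real.eulerMascheroniConstant := by
  have h1 := Complex.hasDerivAt_GammaIntegral (s := 1) (by simp)
  have h2 : HasDerivAt Complex.GammaIntegral (-Real.eulerMascheroniConstant : ℂ) 1 := by
    refine Complex.hasDerivAt_Gamma_one.congr_of_eventuallyEq ?_
    have : IsOpen {s : ℂ | 0 < s.re} := Complex.continuous_re.isOpen_preimage _ isOpen_Ioi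
    filter_upwards [this.mem_nhds (by simp : (0 : ℝ) < (1 : ℂ).re)] with a ha
    exact (Complex.Gamma_eq_integral ha).symm
  have h3 := h1.unique h2
  simp only [sub_self, Complex.cpow_zero, one_mul] at h3
  have h4 : ((∫ t in Ioi (0 : ℝ), Real.log t * Real.exp (-t) : ℝ) : ℂ) =
      -Real.eulerMascheroniConstant := by
    rw [← h3, ← integral_complex_ofReal]
    push_cast
    rfl
  exact_mod_cast h4

theorem integrableOn_log_mul_exp_neg :
    IntegrableOn (fun t : ℝ => Real.log t * Real.exp (-t)) (Ioi 0) := by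
  refine Integrable.of_integral_ne_zero ?_
  rw [integral_log_mul_exp_neg]
  linarith [Real.one_half_lt_eulerMascheroniConstant]

theorem tendsto_log_mul_exp_neg_atTop :
    Tendsto (fun t : ℝ => Real.log t * Real.exp (-t)) atTop (𝓝 0) := by
  have h := Real.tendsto_pow_mul_exp_neg_atTop_nhds_zero 1
  refine squeeze_zero' ?_ ?_ h
  · filter_upwards [eventually_ge_atTop 1] with t ht
    exact mul_nonneg (Real.log_nonneg ht) (Real.exp_pos _).le
  · filter_upwards [eventually_ge_atTop 1] with t ht
    rw [pow_one]
    gcongr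
    exact (Real.log_le_sub_one_of_pos (by linarith)).trans (by linarith)

theorem integrableOn_exp_neg_div {s : ℝ} (hs : 0 < s) :
    IntegrableOn (fun t : ℝ => Real.exp (-t) / t) (Ioi s) := by
  refine ((integrableOn_exp_neg_Ioi s).const_mul s⁻¹).mono'
    (by fun_prop : Measurable _).aestronglyMeasurable ?_
  filter_upwards [ae_restrict_mem measurableSet_Ioi] with t (ht : s < t)
  have h0 : 0 < t := hs.trans ht
  rw [Real.norm_of_nonneg (by positivity), div_eq_inv_mul]
  gcongr

theorem expIntegralE1_eq_integral_log {s : ℝ} (hs : 0 < s) :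
    expIntegralE1 s = -(Real.log s * Real.exp (-s)) +
      ∫ t in Ioi s, Real.log t * Real.exp (-t) := by
  have hderiv : ∀ t ∈ Ici s, HasDerivAt (fun t : ℝ => Real.log t * Real.exp (-t))
      (Real.exp (-t) / t - Real.log t * Real.exp (-t)) t := by
    intro t ht
    have h0 : t ≠ 0 := (hs.trans_le ht).ne'
    convert! (Real.hasDerivAt_log h0).fun_mul (hasDerivAt_neg t).exp using 1
    field_simp
    ring
  have hlog := integrableOn_log_mul_exp_neg.mono_set (Ioi_subset_Ioi hs.le)
  have h := integral_Ioi_of_hasDerivAt_of_tendsto' hderiv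
    ((integrableOn_exp_neg_div hs).sub hlog) tendsto_log_mul_exp_neg_atTop
  rw [integral_sub (integrableOn_exp_neg_div hs) hlog] at h
  rw [expIntegralE1]
  linarith

theorem tendsto_setIntegral_Ioi_nhdsGT {f : ℝ → ℝ} {a : ℝ} (hf : IntegrableOn f (Ioi a)) :
    Tendsto (fun s => ∫ t in Ioi s, f t) (𝓝[>] a) (𝓝 (∫ t in Ioi a, f t)) := by
  have h := (aecover_Ioi_of_Ioi (μ := volume) (l := 𝓝[>] a) (a := id) (A := a)
    nhdsWithin_le_nhds).integral_tendsto_of_countably_generated hf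
  refine h.congr' ?_
  filter_upwards [self_mem_nhdsWithin] with s (hs : a < s)
  rw [Measure.restrict_restrict measurableSet_Ioi, id,
    inter_eq_left.2 (Ioi_subset_Ioi hs.le)]

theorem tendsto_expIntegralE1_add_log :
    Tendsto (fun s => expIntegralE1 s + Real.log s) (𝓝[>] 0)
      (𝓝 (-Real.eulerMascheroniConstant)) := by
  have h1 : Tendsto (fun s : ℝ => Real.log s * (1 - Real.exp (-s))) (𝓝[>] 0) (𝓝 0) := by
    have h2 : Tendsto (fun s : ℝ => -(s * Real.log s)) (𝓝[>] 0) (𝓝 0) := by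
      simpa using (Real.continuous_mul_log.tendsto 0).mono_left nhdsWithin_le_nhds |>.neg
    refine squeeze_zero_norm' ?_ h2
    filter_upwards [Ioo_mem_nhdsGT one_pos] with s hs
    have hl : Real.log s ≤ 0 := Real.log_nonpos hs.1.le hs.2.le
    have he : Real.exp (-s) ≤ 1 := Real.exp_le_one_iff.2 (by linarith [hs.1])
    rw [norm_mul, Real.norm_of_nonpos hl, Real.norm_of_nonneg (by linarith)]
    nlinarith [Real.add_one_le_exp (-s)]
  have h := h1.add (tendsto_setIntegral_Ioi_nhdsGT integrableOn_log_mul_exp_neg)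
  rw [integral_log_mul_exp_neg, zero_add] at h
  refine h.congr' ?_
  filter_upwards [self_mem_nhdsWithin] with s (hs : 0 < s)
  rw [expIntegralE1_eq_integral_log hs]
  ring

theorem hasDerivAt_tsum_expIntegralEi (x : ℝ) :
    HasDerivAt (fun x : ℝ => ∑' k : ℕ, x ^ (k + 1) / ((k + 1) * (Nat.factorial (k + 1))))
      (∑' k : ℕ, x ^ k / (Nat.factorial (k + 1))) x := by
  refine hasDerivAt_tsum_of_isPreconnected (F := ℝ)
    (g' := fun (k : ℕ) (y : ℝ) => y ^ k / (Nat.factorial (k + 1)))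
    (u := fun k : ℕ => (|x| + 1) ^ k / (Nat.factorial k))
    (t := Metric.ball (0 : ℝ) (|x| + 1)) (y₀ := (0 : ℝ)) (Real.summable_pow_div_factorial _)
    Metric.isOpen_ball (convex_ball _ _).isPreconnected ?_ ?_ ?_ ?_ ?_
  · intro k y _
    convert! (hasDerivAt_pow (k + 1) y).div_const
      (((k : ℝ) + 1) * (Nat.factorial (k + 1))) using 1
    push_cast
    field_simp
  · intro k y hy
    have hy' : |y| ≤ |x| + 1 := by simpa using (mem_ball_zero_iff.1 hy).le
    rw [norm_div, norm_pow, Real.norm_eq_abs, RCLike.norm_natCast]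
    gcongr
    exact Nat.le_succ k
  · simp; positivity
  · simp
  · simp

theorem tsum_pow_div_factorial_succ {x : ℝ} (hx : x ≠ 0) :
    ∑' k : ℕ, x ^ k / (Nat.factorial (k + 1)) = (Real.exp x - 1) / x := by
  have h := (Real.summable_pow_div_factorial x).tsum_eq_zero_add
  have he : Real.exp x = ∑' n : ℕ, x ^ n / (Nat.factorial n) := by
    rw [Real.exp_eq_exp_ℝ, NormedSpace.exp_eq_tsum_div]
  rw [← he] at h
  rw [eq_div_iff hx, ← tsum_mul_right, h]
  simp [pow_succ, div_mul_eq_mul_div]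

theorem hasDerivAt_expIntegralEi {x : ℝ} (hx : x ≠ 0) :
    HasDerivAt expIntegralEi (Real.exp x / x) x := by
  unfold expIntegralEi
  convert! ((Real.hasDerivAt_log hx).const_add Real.eulerMascheroniConstant).fun_add
    (hasDerivAt_tsum_expIntegralEi x) using 1
  rw [tsum_pow_div_factorial_succ hx]
  field_simp
  ring

theorem tendsto_expIntegralEi_sub_log :
    Tendsto (fun s => expIntegralEi s - Real.log s) (𝓝 0) (𝓝 Real.eulerMascheroniConstant) := by
  have h := (hasDerivAt_tsum_expIntegralEi 0).continuousAt.tendsto.const_add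
    Real.eulerMascheroniConstant
  simp only [zero_pow (Nat.succ_ne_zero _), zero_div, tsum_zero, add_zero] at h
  refine h.congr fun s => ?_
  rw [expIntegralEi]
  ring

end ExponentialIntegrals

section LogCothHalf

theorem one_sub_exp_neg_pos {u : ℝ} (hu : 0 < u) : 0 < 1 - Real.exp (-u) := by
  simpa using hu

theorem log_one_add_exp_neg_div {u : ℝ} (hu : 0 < u) :
    Real.log ((1 + Real.exp (-u)) / (1 - Real.exp (-u))) =
      Real.log (1 + Real.exp (-u)) - Real.log (1 - Real.exp (-u)) :=
  Real.log_div (by positivity) (one_sub_exp_neg_pos hu).ne'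

theorem hasDerivAt_log_one_add_exp_neg_div {u : ℝ} (hu : 0 < u) :
    HasDerivAt (fun u : ℝ => Real.log ((1 + Real.exp (-u)) / (1 - Real.exp (-u))))
      (-(1 / Real.sinh u)) u := by
  have hm := one_sub_exp_neg_pos hu
  have hp : 0 < 1 + Real.exp (-u) := by positivity
  have he : HasDerivAt (fun u : ℝ => Real.exp (-u)) (-Real.exp (-u)) u := by
    simpa using (hasDerivAt_neg u).exp
  have h := ((he.const_add 1).log hp.ne').fun_sub ((he.const_sub 1).log hm.ne')
  have h' := h.congr_of_eventuallyEq (f₁ := fun u : ℝ =>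
    Real.log ((1 + Real.exp (-u)) / (1 - Real.exp (-u)))) (by
      filter_upwards [Ioi_mem_nhds hu] with v hv using log_one_add_exp_neg_div hv)
  convert! h' using 1
  have hs : Real.exp (-u) * (2 * Real.sinh u) =
      (1 + Real.exp (-u)) * (1 - Real.exp (-u)) := by
    have : Real.exp (-u) * Real.exp u = 1 := by rw [← Real.exp_add]; simp
    rw [Real.sinh_eq]
    linear_combination this
  have hsinh : Real.sinh u ≠ 0 := (Real.sinh_pos_iff.2 hu).ne'
  field_simp
  linear_combination hs

theorem tendsto_log_one_add_exp_neg_div_atTop :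
    Tendsto (fun u : ℝ => Real.log ((1 + Real.exp (-u)) / (1 - Real.exp (-u)))) atTop (𝓝 0) := by
  have he : Tendsto (fun u : ℝ => Real.exp (-u)) atTop (𝓝 0) :=
    Real.tendsto_exp_neg_atTop_nhds_zero
  have h := ((he.const_add 1).div (he.const_sub 1) (by simp)).log (by simp)
  simpa using h

theorem tendsto_log_one_add_exp_neg_div_add_log :
    Tendsto (fun u : ℝ => Real.log ((1 + Real.exp (-u)) / (1 - Real.exp (-u))) + Real.log u)
      (𝓝[>] 0) (𝓝 (Real.log 2)) := by
  have hd : HasDerivAt (fun u : ℝ => 1 - Real.exp (-u)) 1 0 := by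
    simpa using (hasDerivAt_neg (0 : ℝ)).exp.const_sub 1
  have h1 : Tendsto (fun u : ℝ => u⁻¹ * (1 - Real.exp (-u))) (𝓝[>] 0) (𝓝 1) := by
    simpa using (hasDerivAt_iff_tendsto_slope_zero.1 hd).mono_left
      (nhdsWithin_mono 0 (t := {0}ᶜ) (s := Ioi 0) fun u hu => ne_of_gt hu)
  have h2 : Tendsto (fun u : ℝ => 1 + Real.exp (-u)) (𝓝[>] 0) (𝓝 2) := by
    have : Tendsto (fun u : ℝ => 1 + Real.exp (-u)) (𝓝 0) (𝓝 (1 + Real.exp (-0))) :=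
      Continuous.tendsto (by fun_prop) 0
    norm_num at this
    exact this.mono_left nhdsWithin_le_nhds
  have h := (h2.log two_ne_zero).sub (h1.log one_ne_zero)
  rw [Real.log_one, sub_zero] at h
  refine h.congr' ?_
  filter_upwards [self_mem_nhdsWithin] with u (hu : 0 < u)
  rw [log_one_add_exp_neg_div hu, Real.log_mul (inv_ne_zero hu.ne') (one_sub_exp_neg_pos hu).ne',
    Real.log_inv]
  ring

end LogCothHalf

section Langevin

/-- The Langevin function `coth u - 1 / u`, equal to `0` at `u = 0`. -/
noncomputable def langevin (u : ℝ) : ℝ :=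
  Real.cosh u / Real.sinh u - 1 / u

theorem measurable_langevin : Measurable langevin := by
  unfold langevin
  exact (Real.measurable_cosh.div Real.measurable_sinh).sub (measurable_const.div measurable_id)

theorem langevin_neg (u : ℝ) : langevin (-u) = -langevin u := by
  simp only [langevin, Real.cosh_neg, Real.sinh_neg, div_neg]
  ring

theorem langevin_eq_integral (u : ℝ) :
    langevin u =
      2 * ∫ x in Ioi (0 : ℝ), Real.sin (u * x) / (Real.exp (Real.pi * x) - 1) := by
  rw [integral_sin_div_exp_pi_mul_sub_one, langevin]
  ring

theorem exists_abs_langevin_le : ∃ C : ℝ, 0 ≤ C ∧ ∀ u, |langevin u| ≤ C * |u| := by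
  have hnn : 0 ≤ ∫ x in Ioi (0 : ℝ), x / (Real.exp (Real.pi * x) - 1) :=
    setIntegral_nonneg measurableSet_Ioi fun x hx =>
      div_nonneg (mem_Ioi.1 hx).le (exp_pi_mul_sub_one_pos hx).le
  refine ⟨2 * ∫ x in Ioi (0 : ℝ), x / (Real.exp (Real.pi * x) - 1), by positivity, fun u => ?_⟩
  rw [langevin_eq_integral, abs_mul, abs_two, mul_assoc, mul_comm _ |u|]
  gcongr
  rw [← integral_const_mul, ← Real.norm_eq_abs]
  exact norm_integral_le_of_norm_le (integrableOn_div_exp_pi_mul_sub_one.const_mul |u|)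
    (ae_restrict_of_forall_mem measurableSet_Ioi fun x hx =>
      abs_sin_mul_div_le u (mem_Ioi.1 hx).le (exp_pi_mul_sub_one_pos hx).le)

theorem integrableOn_exp_neg_mul_langevin_add (s : ℝ) :
    IntegrableOn (fun t : ℝ => Real.exp (-t) * langevin (t + s)) (Ioi 0) := by
  obtain ⟨C, hC0, hC⟩ := exists_abs_langevin_le
  have h1 : IntegrableOn (fun t : ℝ => t * Real.exp (-t)) (Ioi 0) := by
    simpa using integrableOn_mul_exp_neg_mul one_pos
  refine ((h1.add ((integrableOn_exp_neg_Ioi 0).const_mul |s|)).const_mul C).mono'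
    ((Real.measurable_exp.comp measurable_neg).mul
      (measurable_langevin.comp (measurable_add_const s))).aestronglyMeasurable ?_
  filter_upwards [ae_restrict_mem measurableSet_Ioi] with t (ht : 0 < t)
  have h2 : |t + s| ≤ t + |s| := by simpa [abs_of_pos ht] using abs_add_le t s
  rw [norm_mul, Real.norm_eq_abs, Real.abs_exp, Real.norm_eq_abs]
  calc Real.exp (-t) * |langevin (t + s)| ≤ Real.exp (-t) * (C * (t + |s|)) := by
        gcongr
        exact (hC _).trans (by gcongr)
    _ = C * (t * Real.exp (-t) + |s| * Real.exp (-t)) := by ring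

theorem setIntegral_Ioi_comp_add_right (f : ℝ → ℝ) (s : ℝ) :
    ∫ t in Ioi (0 : ℝ), f (t + s) = ∫ u in Ioi s, f u := by
  have h := (measurePreserving_add_right volume s).setIntegral_preimage_emb
    (measurableEmbedding_addRight s) f (Ioi s)
  rwa [preimage_add_const_Ioi, sub_self] at h

theorem integrableOn_Ioi_comp_add_right_iff {f : ℝ → ℝ} {s : ℝ} :
    IntegrableOn (fun t => f (t + s)) (Ioi 0) ↔ IntegrableOn f (Ioi s) := by
  have h := (measurePreserving_add_right volume s).integrableOn_comp_preimage
    (measurableEmbedding_addRight s) (f := f) (s := Ioi s)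
  rwa [preimage_add_const_Ioi, sub_self] at h

theorem integrableOn_exp_neg_mul_langevin (s : ℝ) :
    IntegrableOn (fun u : ℝ => Real.exp (-u) * langevin u) (Ioi s) := by
  rw [← integrableOn_Ioi_comp_add_right_iff]
  refine IntegrableOn.congr_fun ((integrableOn_exp_neg_mul_langevin_add s).const_mul
    (Real.exp (-s))) (fun t _ => ?_) measurableSet_Ioi
  simp only [neg_add, Real.exp_add]
  ring

theorem integral_exp_neg_mul_langevin_add (s : ℝ) :
    ∫ t in Ioi (0 : ℝ), Real.exp (-t) * langevin (t + s) =
      Real.exp s * ∫ u in Ioi s, Real.exp (-u) * langevin u := by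
  rw [← setIntegral_Ioi_comp_add_right (fun u => Real.exp (-u) * langevin u),
    ← integral_const_mul]
  refine setIntegral_congr_fun measurableSet_Ioi fun t _ => ?_
  rw [← mul_assoc, ← Real.exp_add]
  ring_nf

theorem integral_Ioi_exp_neg_mul_langevin {s : ℝ} (hs : 0 < s) :
    ∫ u in Ioi s, Real.exp (-u) * langevin u =
      Real.log ((1 + Real.exp (-s)) / (1 - Real.exp (-s))) - Real.exp (-s)
        - expIntegralE1 s := by
  have hderiv : ∀ u ∈ Ici s, HasDerivAt
      (fun u : ℝ => Real.exp (-u) - Real.log ((1 + Real.exp (-u)) / (1 - Real.exp (-u))))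
      (Real.exp (-u) * (Real.cosh u / Real.sinh u)) u := by
    intro u hu
    have hu0 : 0 < u := hs.trans_le hu
    have hsinh : Real.sinh u ≠ 0 := (Real.sinh_pos_iff.2 hu0).ne'
    convert! (hasDerivAt_neg u).exp.fun_sub (hasDerivAt_log_one_add_exp_neg_div hu0) using 1
    have : Real.exp (-u) * Real.exp u = 1 := by rw [← Real.exp_add]; simp
    have h2 := Real.cosh_add_sinh u
    field_simp
    linear_combination this + Real.exp (-u) * h2
  have hlim := Real.tendsto_exp_neg_atTop_nhds_zero.sub tendsto_log_one_add_exp_neg_div_atTop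
  have hpos : ∀ u ∈ Ioi s, 0 ≤ Real.exp (-u) * (Real.cosh u / Real.sinh u) := fun u hu =>
    mul_nonneg (Real.exp_pos _).le
      (div_nonneg (Real.cosh_pos u).le (Real.sinh_nonneg_iff.2 (hs.trans hu).le))
  have hint := integrableOn_Ioi_deriv_of_nonneg' hderiv hpos hlim
  have h := integral_Ioi_of_hasDerivAt_of_nonneg' hderiv hpos hlim
  have hsub := integral_sub hint (integrableOn_exp_neg_div hs)
  rw [h] at hsub
  rw [expIntegralE1]
  refine Eq.trans ?_ (hsub.trans (by ring))
  refine setIntegral_congr_fun measurableSet_Ioi fun u _ => ?_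
  simp only [langevin]
  ring

theorem integral_Ioi_zero_exp_neg_mul_langevin :
    ∫ u in Ioi (0 : ℝ), Real.exp (-u) * langevin u =
      Real.eulerMascheroniConstant + Real.log 2 - 1 := by
  refine tendsto_nhds_unique
    (tendsto_setIntegral_Ioi_nhdsGT (integrableOn_exp_neg_mul_langevin 0)) ?_
  have he : Tendsto (fun u : ℝ => Real.exp (-u)) (𝓝[>] 0) (𝓝 1) := by
    have : Tendsto (fun u : ℝ => Real.exp (-u)) (𝓝 0) (𝓝 (Real.exp (-0))) :=
      Continuous.tendsto (by fun_prop) 0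
    rw [neg_zero, Real.exp_zero] at this
    exact this.mono_left nhdsWithin_le_nhds
  have h := (tendsto_log_one_add_exp_neg_div_add_log.sub he).sub tendsto_expIntegralE1_add_log
  rw [show Real.log 2 - 1 - -Real.eulerMascheroniConstant =
    Real.eulerMascheroniConstant + Real.log 2 - 1 by ring] at h
  refine h.congr' ?_
  filter_upwards [self_mem_nhdsWithin] with s (hs : 0 < s)
  rw [integral_Ioi_exp_neg_mul_langevin hs]
  ring

theorem intervalIntegral_exp_mul_langevin {s : ℝ} (hs : 0 < s) :
    ∫ u in (0 : ℝ)..s, Real.exp u * langevin u =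
      Real.exp s - Real.log ((1 + Real.exp (-s)) / (1 - Real.exp (-s))) - expIntegralEi s -
        (1 - Real.log 2 - Real.eulerMascheroniConstant) := by
  have hderiv : ∀ u > 0, HasDerivAt (fun u : ℝ => Real.exp u -
      Real.log ((1 + Real.exp (-u)) / (1 - Real.exp (-u))) - expIntegralEi u)
      (Real.exp u * langevin u) u := by
    intro u hu
    have hsinh : Real.sinh u ≠ 0 := (Real.sinh_pos_iff.2 hu).ne'
    convert! ((Real.hasDerivAt_exp u).fun_sub (hasDerivAt_log_one_add_exp_neg_div hu)).fun_sub
      (hasDerivAt_expIntegralEi hu.ne') using 1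
    have : Real.exp (-u) * Real.exp u = 1 := by rw [← Real.exp_add]; simp
    have h2 := Real.cosh_sub_sinh u
    rw [langevin]
    field_simp
    linear_combination u * this + u * Real.exp u * h2
  have hint : IntervalIntegrable (fun u => Real.exp u * langevin u) volume 0 s := by
    obtain ⟨C, -, hC⟩ := exists_abs_langevin_le
    refine (Continuous.intervalIntegrable (u := fun u : ℝ => Real.exp u * (C * |u|))
      (by fun_prop) 0 s).mono_fun'
      (Real.measurable_exp.mul measurable_langevin).aestronglyMeasurable (ae_of_all _ fun u => ?_)
    simp only [norm_mul, Real.norm_eq_abs, Real.abs_exp]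
    gcongr
    exact hC u
  have hzero : Tendsto (fun u : ℝ => Real.exp u -
      Real.log ((1 + Real.exp (-u)) / (1 - Real.exp (-u))) - expIntegralEi u) (𝓝[>] 0)
      (𝓝 (1 - Real.log 2 - Real.eulerMascheroniConstant)) := by
    have he : Tendsto Real.exp (𝓝[>] 0) (𝓝 1) := by
      simpa using (Real.continuous_exp.tendsto 0).mono_left nhdsWithin_le_nhds
    refine ((he.sub tendsto_log_one_add_exp_neg_div_add_log).sub
      (tendsto_expIntegralEi_sub_log.mono_left nhdsWithin_le_nhds)).congr fun u => ?_
    ring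
  exact intervalIntegral.integral_eq_sub_of_hasDerivAt_of_tendsto hs
    (fun u hu => hderiv u hu.1) hint hzero
    ((hderiv s hs).continuousAt.tendsto.mono_left nhdsWithin_le_nhds)

theorem integral_Ioi_neg_exp_neg_mul_langevin {s : ℝ} (hs : 0 < s) :
    ∫ u in Ioi (-s), Real.exp (-u) * langevin u =
      Real.log ((1 + Real.exp (-s)) / (1 - Real.exp (-s))) + expIntegralEi s - Real.exp s := by
  have hneg : ∫ u in (-s)..0, Real.exp (-u) * langevin u =
      -∫ u in (0 : ℝ)..s, Real.exp u * langevin u := by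
    have h := intervalIntegral.integral_comp_neg (a := -s) (b := 0)
      (fun u => Real.exp u * langevin (-u))
    simp only [neg_neg, neg_zero, langevin_neg, mul_neg, intervalIntegral.integral_neg] at h
    exact h
  rw [← intervalIntegral.integral_interval_add_Ioi (integrableOn_exp_neg_mul_langevin (-s))
    (integrableOn_exp_neg_mul_langevin 0),
    hneg, intervalIntegral_exp_mul_langevin hs, integral_Ioi_zero_exp_neg_mul_langevin]
  ring

theorem two_mul_integral_cos_eq_integral_langevin (s : ℝ) :
    2 * ∫ x in Ioi (0 : ℝ),
        Real.cos (s * x) * x / ((1 + x ^ 2) * (Real.exp (Real.pi * x) - 1)) =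
      (Real.exp s * (∫ u in Ioi s, Real.exp (-u) * langevin u) +
        Real.exp (-s) * ∫ u in Ioi (-s), Real.exp (-u) * langevin u) / 2 := by
  have hprod : Integrable (Function.uncurry fun x t : ℝ =>
      Real.exp (-t) * (Real.sin (t * x) * Real.cos (s * x) / (Real.exp (Real.pi * x) - 1)))
      ((volume.restrict (Ioi 0)).prod (volume.restrict (Ioi 0))) := by
    have h1 : IntegrableOn (fun t : ℝ => t * Real.exp (-t)) (Ioi 0) := by
      simpa using integrableOn_mul_exp_neg_mul one_pos
    refine (integrableOn_div_exp_pi_mul_sub_one.mul_prod h1).mono'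
      (by unfold Function.uncurry; fun_prop : Measurable _).aestronglyMeasurable ?_
    rw [Measure.prod_restrict]
    refine ae_restrict_of_forall_mem (measurableSet_Ioi.prod measurableSet_Ioi) ?_
    rintro ⟨x, t⟩ ⟨hx, ht⟩
    have hx : 0 < x := hx
    have ht : 0 < t := ht
    have hd := exp_pi_mul_sub_one_pos hx
    have h2 := abs_sin_mul_div_le t hx.le hd.le
    rw [abs_of_pos ht] at h2
    simp only [Function.uncurry]
    rw [norm_mul, Real.norm_eq_abs, Real.abs_exp, mul_div_right_comm, norm_mul, Real.norm_eq_abs,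
      Real.norm_eq_abs]
    calc Real.exp (-t) *
          (|Real.sin (t * x) / (Real.exp (Real.pi * x) - 1)| * |Real.cos (s * x)|)
        ≤ Real.exp (-t) * (t * (x / (Real.exp (Real.pi * x) - 1)) * 1) := by
          gcongr
          exact Real.abs_cos_le_one _
      _ = x / (Real.exp (Real.pi * x) - 1) * (t * Real.exp (-t)) := by ring
  have hswap := integral_integral_swap hprod
  have hleft : ∀ x : ℝ, ∫ t in Ioi (0 : ℝ), Real.exp (-t) *
      (Real.sin (t * x) * Real.cos (s * x) / (Real.exp (Real.pi * x) - 1)) =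
      Real.cos (s * x) * x / ((1 + x ^ 2) * (Real.exp (Real.pi * x) - 1)) := by
    intro x
    have h := integral_exp_neg_mul_mul_sin one_pos x
    rw [one_pow] at h
    have hc : ∀ t : ℝ, Real.exp (-t) *
        (Real.sin (t * x) * Real.cos (s * x) / (Real.exp (Real.pi * x) - 1)) =
        Real.exp (-(1 * t)) * Real.sin (x * t) *
          (Real.cos (s * x) / (Real.exp (Real.pi * x) - 1)) := by
      intro t
      rw [one_mul, mul_comm t x]
      ring
    simp only [hc]
    rw [integral_mul_const, h, div_mul_div_comm, mul_comm x]
  have hright : ∀ t : ℝ, 2 * ∫ x in Ioi (0 : ℝ), Real.exp (-t) *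
      (Real.sin (t * x) * Real.cos (s * x) / (Real.exp (Real.pi * x) - 1)) =
      (Real.exp (-t) * langevin (t + s) + Real.exp (-t) * langevin (t + -s)) / 2 := by
    intro t
    have hadd := integral_add (integrableOn_sin_div_exp_pi_mul_sub_one (t + s))
      (integrableOn_sin_div_exp_pi_mul_sub_one (t + -s))
    have hcongr : ∫ x in Ioi (0 : ℝ), (Real.sin ((t + s) * x) / (Real.exp (Real.pi * x) - 1) +
        Real.sin ((t + -s) * x) / (Real.exp (Real.pi * x) - 1)) =
        2 * ∫ x in Ioi (0 : ℝ),
          Real.sin (t * x) * Real.cos (s * x) / (Real.exp (Real.pi * x) - 1) := by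
      rw [← integral_const_mul]
      refine integral_congr_ae (ae_of_all _ fun x => ?_)
      simp only [add_mul, neg_mul, Real.sin_add, Real.sin_neg, Real.cos_neg]
      ring
    rw [integral_const_mul, langevin_eq_integral, langevin_eq_integral]
    linear_combination Real.exp (-t) * hadd - Real.exp (-t) * hcongr
  simp only [hleft] at hswap
  rw [hswap, ← integral_const_mul]
  simp only [hright]
  rw [integral_div, integral_add (integrableOn_exp_neg_mul_langevin_add s)
    (integrableOn_exp_neg_mul_langevin_add (-s)), integral_exp_neg_mul_langevin_add,
    integral_exp_neg_mul_langevin_add]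

end Langevin

/-- For every `s > 0`,
`2 ∫₀^∞ cos(s x) · x / ((1+x²)(e^{πx} − 1)) dx
  = (e^{−s} Ei(s) − e^{s} E₁(s))/2 + cosh(s) log((1+e^{−s})/(1−e^{−s})) − 1`,
and at `s = 0`, `2 ∫₀^∞ x/((1+x²)(e^{πx} − 1)) dx = γ + log 2 − 1`. -/
theorem stmt_13 :
    (∀ s : ℝ, 0 < s →
      2 * ∫ x in Ioi (0 : ℝ),
          Real.cos (s * x) * x / ((1 + x ^ 2) * (Real.exp (Real.pi * x) - 1)) =
        (Real.exp (-s) * expIntegralEi s - Real.exp s * expIntegralE1 s) / 2 +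
          Real.cosh s * Real.log ((1 + Real.exp (-s)) / (1 - Real.exp (-s))) - 1) ∧
    (2 * ∫ x in Ioi (0 : ℝ), x / ((1 + x ^ 2) * (Real.exp (Real.pi * x) - 1)) =
        Real.eulerMascheroniConstant + Real.log 2 - 1) := by
  refine ⟨fun s hs => ?_, ?_⟩
  · have h : Real.exp s * Real.exp (-s) = 1 := by rw [← Real.exp_add]; simp
    rw [two_mul_integral_cos_eq_integral_langevin, integral_Ioi_exp_neg_mul_langevin hs,
      integral_Ioi_neg_exp_neg_mul_langevin hs, Real.cosh_eq]
    linear_combination -h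
  · have h := two_mul_integral_cos_eq_integral_langevin 0
    simp only [zero_mul, Real.cos_zero, one_mul, neg_zero, Real.exp_zero] at h
    rw [h, integral_Ioi_zero_exp_neg_mul_langevin]
    ring
end
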